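/- Let k ≥ 4 and let (λ₁, ..., λ_{k−3}) be real numbers with 0 < λ₁ < λ₂ < ⋯ < λ_{k−3} < 1. Then the k-tuple (z₁, ..., z_k) := (−i, 1, −1, 𝒞(λ₁), ..., 𝒞(λ_{k−3})) is a cyclically oriented tuple of points of the unit circle S¹, and its cross ratio coordinates recover the λ_j, that is, [z₂:z₃:z₁:z_{j+3}] = λ_j for j = 1, ..., k−3. -/

import Mathlib

open Complex

/-- The cross ratio `[z₁:z₂:z₃:z₄] = (z₁-z₃)(z₂-z₄)/((z₂-z₃)(z₁-z₄))`. -/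
noncomputable def crossRatio (z₁ z₂ z₃ z₄ : ℂ) : ℂ :=
  ((z₁ - z₃) * (z₂ - z₄)) / ((z₂ - z₃) * (z₁ - z₄))

/-- A tuple `(z₁, …, z_k)` of points of `S¹` is *cyclically oriented* if it can be written as
`z_j = e^{iθ_j}` with `θ₁ < θ₂ < ⋯ < θ_k < θ₁ + 2π`. -/
def CyclicallyOriented {k : ℕ} (z : Fin k → ℂ) : Prop :=
  ∃ θ : Fin k → ℝ, StrictMono θ ∧ (∀ i j : Fin k, θ j < θ i + 2 * Real.pi) ∧
    ∀ j, z j = Complex.exp (θ j * Complex.I)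

/-- The Cayley transform `𝒞(z) = (z-i)/(z+i)`. -/
noncomputable def cayley (z : ℂ) : ℂ := (z - Complex.I) / (z + Complex.I)

/-- The tuple `(-i, 1, -1, 𝒞(λ₁), …, 𝒞(λ_{k-3}))` (0-indexed). -/
noncomputable def stdTuple (k : ℕ) (lam : Fin (k - 3) → ℝ) : Fin k → ℂ := fun j =>
  if h0 : (j : ℕ) = 0 then -Complex.I
  else if h1 : (j : ℕ) = 1 then 1
  else if h2 : (j : ℕ) = 2 then -1
  else cayley ((lam ⟨(j : ℕ) - 3, by have := j.isLt; omega⟩ : ℝ) : ℂ)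

lemma add_I_ne (x : ℝ) : (x : ℂ) + Complex.I ≠ 0 := by
  intro h
  have := congrArg Complex.im h
  simp at this

lemma cayley_eq_exp (x : ℝ) :
    cayley x = Complex.exp (((Real.pi + 2 * Real.arctan x : ℝ) : ℂ) * Complex.I) := by
  have h1 : Complex.exp (((Real.pi + 2 * Real.arctan x : ℝ) : ℂ) * Complex.I)
      = -(Complex.exp ((Real.arctan x : ℝ) * Complex.I)) ^ 2 := by
    rw [← Complex.exp_nat_mul]
    push_cast
    rw [add_mul, Complex.exp_add, Complex.exp_pi_mul_I]
    ring_nf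
  have hpos : (0 : ℝ) < 1 + x ^ 2 := by positivity
  have hs : ((Real.cos (Real.arctan x) : ℝ) : ℂ) ^ 2 * (1 + (x : ℂ) ^ 2) = 1 := by
    have : Real.cos (Real.arctan x) ^ 2 * (1 + x ^ 2) = 1 := by
      rw [Real.cos_sq_arctan]; field_simp
    exact_mod_cast this
  have hsin : Real.sin (Real.arctan x) = x * Real.cos (Real.arctan x) := by
    rw [Real.sin_arctan, Real.cos_arctan]; ring
  rw [h1, Complex.exp_mul_I, ← Complex.ofReal_cos, ← Complex.ofReal_sin, hsin, cayley,
    div_eq_iff (add_I_ne x)]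
  push_cast at hs ⊢
  generalize Complex.cos (Complex.arctan x) = c at *
  have hI := Complex.I_sq
  linear_combination (-(x : ℂ) + Complex.I) * hs +
    (c ^ 2 * (2 * x + x ^ 2 * x + x ^ 2 * Complex.I)) * hI

noncomputable def stdAngle (k : ℕ) (lam : Fin (k - 3) → ℝ) : Fin k → ℝ := fun j =>
  if h0 : (j : ℕ) = 0 then -(Real.pi / 2)
  else if h1 : (j : ℕ) = 1 then 0
  else if h2 : (j : ℕ) = 2 then Real.pi
  else Real.pi + 2 * Real.arctan (lam ⟨(j : ℕ) - 3, by have := j.isLt; omega⟩)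

lemma stdTuple_eq_exp (k : ℕ) (lam : Fin (k - 3) → ℝ) (j : Fin k) :
    stdTuple k lam j = Complex.exp (stdAngle k lam j * Complex.I) := by
  unfold stdTuple stdAngle
  split_ifs
  · push_cast
    rw [neg_mul, Complex.exp_neg, Complex.exp_pi_div_two_mul_I, Complex.inv_I]
  · simp
  · simp
  · exact cayley_eq_exp _

/-- **Lemma (realization of cross ratio coordinates).** For `0 < λ₁ < ⋯ < λ_{k-3} < 1`, the
tuple `(-i, 1, -1, 𝒞(λ₁), …, 𝒞(λ_{k-3}))` is a cyclically oriented tuple of points of the unit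
circle and its cross ratio coordinates are exactly the `λ_j`. -/
theorem stdTuple_cyclicallyOriented_and_coords (k : ℕ) (hk : 4 ≤ k)
    (lam : Fin (k - 3) → ℝ) (h0 : ∀ j, 0 < lam j) (hmono : StrictMono lam)
    (h1 : ∀ j, lam j < 1) :
    (∀ j, ‖stdTuple k lam j‖ = 1) ∧
    CyclicallyOriented (stdTuple k lam) ∧
    ∀ j : Fin (k - 3),
      crossRatio (stdTuple k lam ⟨1, by omega⟩) (stdTuple k lam ⟨2, by omega⟩)
          (stdTuple k lam ⟨0, by omega⟩)
          (stdTuple k lam ⟨(j : ℕ) + 3, by have := j.isLt; omega⟩) = (lam j : ℂ) := by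
  have hpi := Real.pi_pos
  have ha0 : ∀ j, 0 < Real.arctan (lam j) := fun j => Real.arctan_pos.2 (h0 j)
  have ha1 : ∀ j, Real.arctan (lam j) < Real.pi / 4 := fun j => by
    rw [← Real.arctan_one]; exact Real.arctan_strictMono (h1 j)
  refine ⟨fun j => ?_, ⟨stdAngle k lam, ?_, ?_, stdTuple_eq_exp k lam⟩, fun j => ?_⟩
  · rw [stdTuple_eq_exp, Complex.norm_exp_ofReal_mul_I]
  · intro a b hab
    have hab' : (a : ℕ) < b := hab
    unfold stdAngle
    split_ifs <;> first
      | omega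
      | linarith
      | skip
    · linarith [ha0 ⟨(b : ℕ) - 3, by have := b.isLt; omega⟩]
    · linarith [ha0 ⟨(b : ℕ) - 3, by have := b.isLt; omega⟩]
    · linarith [ha0 ⟨(b : ℕ) - 3, by have := b.isLt; omega⟩]
    · have : lam ⟨(a : ℕ) - 3, by have := a.isLt; omega⟩
          < lam ⟨(b : ℕ) - 3, by have := b.isLt; omega⟩ := by
        apply hmono
        rw [Fin.lt_def]
        simp only
        omega
      linarith [Real.arctan_strictMono this]
  · have hlo : ∀ i, -(Real.pi / 2) ≤ stdAngle k lam i := by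
      intro i
      unfold stdAngle
      split_ifs <;> first
        | linarith
        | linarith [ha0 ⟨(i : ℕ) - 3, by have := i.isLt; omega⟩]
    have hhi : ∀ i, stdAngle k lam i < 3 * Real.pi / 2 := by
      intro i
      unfold stdAngle
      split_ifs <;> first
        | linarith
        | linarith [ha1 ⟨(i : ℕ) - 3, by have := i.isLt; omega⟩]
    intro i j
    linarith [hlo i, hhi j]
  · have e : stdTuple k lam ⟨(j : ℕ) + 3, by have := j.isLt; omega⟩ = cayley (lam j) := by
      simp [stdTuple]
    have e0 : stdTuple k lam ⟨0, by omega⟩ = -Complex.I := by simp [stdTuple]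
    have e1 : stdTuple k lam ⟨1, by omega⟩ = 1 := by simp [stdTuple]
    have e2 : stdTuple k lam ⟨2, by omega⟩ = -1 := by simp [stdTuple]
    rw [e, e0, e1, e2]
    have hne := add_I_ne (lam j)
    have hA : (-1 : ℂ) - cayley (lam j) = -(2 * lam j) / (lam j + Complex.I) := by
      unfold cayley; field_simp; ring
    have hB : (1 : ℂ) - cayley (lam j) = 2 * Complex.I / (lam j + Complex.I) := by
      unfold cayley; field_simp; ring
    have hC : (-1 : ℂ) - -Complex.I ≠ 0 := by
      intro h
      have := congrArg Complex.re h
      simp at this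
    have hI := Complex.I_ne_zero
    rw [crossRatio, hA, hB, div_eq_iff (by
      refine mul_ne_zero hC (div_ne_zero (mul_ne_zero two_ne_zero hI) hne))]
    rw [mul_div_assoc', mul_div_assoc', mul_div_assoc']
    congr 1
    linear_combination (-2 * (lam j : ℂ)) * Complex.I_sq
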